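/- Let F₁, F₂ : ℂ⁺ → ℂ⁺ be analytic functions, neither of which is a conformal automorphism of ℂ⁺, satisfying lim_{y→+∞} F_j(iy)/(iy) = 1 for j = 1,2. Then: (i) for every z with Im z ≥ 0 and every w ∈ ℂ⁺ one has F₁(w) − w + z ∈ ℂ⁺ and f(z,w) := F₂(F₁(w) − w + z) − (F₁(w) − w) ∈ ℂ⁺, so that f : (ℂ⁺ ∪ ℝ) × ℂ⁺ → ℂ⁺ is well defined; (ii) there exists a unique analytic self-map ω of ℂ⁺ such that f(z, ω(z)) = ω(z) for all z ∈ ℂ⁺; (iii) this ω satisfies lim_{y→+∞} ω(iy)/(iy) = 1. -/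

import Mathlib

open Complex Filter Set Topology

/-- The open upper half-plane `ℂ⁺ = {z : ℂ | Im z > 0}`. -/
def UHP : Set ℂ := {z : ℂ | 0 < z.im}

lemma mem_UHP {z : ℂ} : z ∈ UHP ↔ 0 < z.im := Iff.rfl

lemma isOpen_UHP : IsOpen UHP := isOpen_lt continuous_const Complex.continuous_im

lemma isPreconnected_UHP : IsPreconnected UHP :=
  (convex_halfSpace_im_gt 0).isPreconnected

lemma sq_norm_sub_conj (p q : ℂ) :
    ‖p - (starRingEnd ℂ) q‖ ^ 2 = ‖p - q‖ ^ 2 + 4 * (p.im * q.im) := by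
  rw [← Complex.normSq_eq_norm_sq, ← Complex.normSq_eq_norm_sq]
  simp [Complex.normSq_apply]
  ring

lemma sub_conj_ne {p q : ℂ} (hp : p ∈ UHP) (hq : q ∈ UHP) : p - (starRingEnd ℂ) q ≠ 0 := by
  intro h
  have := congrArg Complex.im h
  simp at this
  rw [mem_UHP] at hp hq
  linarith

/-- Schwarz-Pick in the upper half-plane. -/
lemma schwarz_pick {g : ℂ → ℂ} (hd : DifferentiableOn ℂ g UHP) (hm : MapsTo g UHP UHP)
    {a b : ℂ} (ha : a ∈ UHP) (hb : b ∈ UHP) :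
    ‖g a - g b‖ ^ 2 * (a.im * b.im) ≤ ‖a - b‖ ^ 2 * ((g a).im * (g b).im) := by
  set A : ℂ → ℂ := fun ζ => (a - (starRingEnd ℂ) a * ζ) / (1 - ζ) with hA
  have hne : ∀ ζ ∈ Metric.ball (0:ℂ) 1, (1 - ζ) ≠ 0 := by
    intro ζ hζ h
    have : ζ = 1 := by linear_combination -h
    simp [this] at hζ
  have hAm : MapsTo A (Metric.ball 0 1) UHP := by
    intro ζ hζ
    have h1 := hne ζ hζ
    have h2 : 0 < Complex.normSq (1 - ζ) := Complex.normSq_pos.2 h1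
    have h3 : Complex.normSq ζ < 1 := by
      rw [Complex.normSq_eq_norm_sq]
      have : ‖ζ‖ < 1 := by simpa using hζ
      nlinarith [norm_nonneg ζ]
    have ha' : 0 < a.im := ha
    have : (A ζ).im = a.im * (1 - Complex.normSq ζ) / Complex.normSq (1 - ζ) := by
      simp only [hA, Complex.div_im]
      rw [← sub_div]
      congr 1
      simp [Complex.normSq_apply]
      ring
    rw [mem_UHP, this]
    have : 0 < 1 - Complex.normSq ζ := by linarith
    positivity
  have hAd : DifferentiableOn ℂ A (Metric.ball 0 1) := by
    intro ζ hζ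
    have h1 := hne ζ hζ
    apply DifferentiableAt.differentiableWithinAt
    simp only [hA]
    fun_prop (disch := assumption)
  set φ : ℂ → ℂ := fun ζ => (g (A ζ) - g a) / (g (A ζ) - (starRingEnd ℂ) (g a)) with hφ
  have hgA : DifferentiableOn ℂ (fun ζ => g (A ζ)) (Metric.ball 0 1) := hd.comp hAd hAm
  have hφd : DifferentiableOn ℂ φ (Metric.ball 0 1) := by
    refine DifferentiableOn.div (hgA.sub_const _) (hgA.sub_const _) ?_
    intro ζ hζ
    exact sub_conj_ne (hm (hAm hζ)) (hm ha)
  have hφm : MapsTo φ (Metric.ball 0 1) (Metric.closedBall 0 1) := by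
    intro ζ hζ
    have h1 := sub_conj_ne (hm (hAm hζ)) (hm ha)
    have h2 := sq_norm_sub_conj (g (A ζ)) (g a)
    have h3 : 0 < (g (A ζ)).im := hm (hAm hζ)
    have h4 : 0 < (g a).im := hm ha
    simp only [hφ, mem_closedBall_zero_iff, norm_div]
    rw [div_le_one (norm_pos_iff.2 h1)]
    have : 0 < (g (A ζ)).im * (g a).im := by positivity
    exact le_of_sq_le_sq (by linarith) (norm_nonneg _)
  have hA0 : A 0 = a := by simp [hA]
  have hφ0 : φ 0 = 0 := by simp [hφ, hA0]
  have hba := sub_conj_ne hb ha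
  set ζ := (b - a) / (b - (starRingEnd ℂ) a) with hζ
  have hpos : 0 < b.im * a.im := mul_pos hb ha
  have hN := sq_norm_sub_conj b a
  have hζ1 : ‖ζ‖ < 1 := by
    rw [hζ, norm_div, div_lt_one (norm_pos_iff.2 hba)]
    exact lt_of_pow_lt_pow_left₀ 2 (norm_nonneg _) (by linarith)
  have haa : a - (starRingEnd ℂ) a ≠ 0 := sub_conj_ne ha ha
  have hAζ : A ζ = b := by
    have h1 : 1 - ζ = (a - (starRingEnd ℂ) a) / (b - (starRingEnd ℂ) a) := by
      rw [hζ]; field_simp; ring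
    have h2 : a - (starRingEnd ℂ) a * ζ = b * (a - (starRingEnd ℂ) a) / (b - (starRingEnd ℂ) a) := by
      rw [hζ]; field_simp; ring
    simp only [hA]
    rw [h1, h2]; field_simp
  have key := Complex.norm_le_norm_of_mapsTo_ball hφd hφm hφ0 hζ1
  have hgn := sub_conj_ne (hm hb) (hm ha)
  have hGN := sq_norm_sub_conj (g b) (g a)
  simp only [hφ, hAζ] at key
  rw [hζ, norm_div, norm_div, div_le_div_iff₀ (norm_pos_iff.2 hgn) (norm_pos_iff.2 hba)] at key
  have k2 := pow_le_pow_left₀ (by positivity) key 2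
  rw [mul_pow, mul_pow, hN, hGN] at k2
  rw [norm_sub_rev (g a), norm_sub_rev a]
  nlinarith

/-- Strict version for maps into `Im > c`. -/
lemma schwarz_pick_shift {f : ℂ → ℂ} {c : ℝ} (hd : DifferentiableOn ℂ f UHP)
    (hc : ∀ w ∈ UHP, c < (f w).im) {a b : ℂ} (ha : a ∈ UHP) (hb : b ∈ UHP) :
    ‖f a - f b‖ ^ 2 * (a.im * b.im) ≤ ‖a - b‖ ^ 2 * (((f a).im - c) * ((f b).im - c)) := by
  have := schwarz_pick (g := fun w => f w - c * I) (hd.sub_const _) (fun w hw => by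
    have := hc w hw
    simp [mem_UHP]; linarith) ha hb
  simpa using this

/-- Uniqueness of fixed points. -/
lemma fixed_unique {f : ℂ → ℂ} {c : ℝ} (hc0 : 0 < c) (hd : DifferentiableOn ℂ f UHP)
    (hc : ∀ w ∈ UHP, c < (f w).im) {a b : ℂ} (ha : a ∈ UHP) (hb : b ∈ UHP)
    (hfa : f a = a) (hfb : f b = b) : a = b := by
  have h := schwarz_pick_shift hd hc ha hb
  have h1 := hc a ha
  have h2 := hc b hb
  rw [hfa] at h h1
  rw [hfb] at h h2
  by_contra hne
  have : 0 < ‖a - b‖ ^ 2 := by have := norm_pos_iff.2 (sub_ne_zero.2 hne); positivity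
  have := le_of_mul_le_mul_left h this
  nlinarith

/-- Julia's lemma. -/
lemma julia {F : ℂ → ℂ} (hd : DifferentiableOn ℂ F UHP) (hm : MapsTo F UHP UHP)
    (hl : Tendsto (fun y : ℝ => F (Complex.I * y) / (Complex.I * y)) atTop (𝓝 1))
    {w : ℂ} (hw : w ∈ UHP) : w.im ≤ (F w).im := by
  have hinv : Tendsto (fun y : ℝ => ((I * y : ℂ))⁻¹) atTop (𝓝 0) := by
    have : Tendsto (fun y : ℝ => (((y⁻¹ : ℝ) : ℂ)) * (-I)) atTop (𝓝 (((0:ℝ):ℂ) * (-I))) :=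
      ((Complex.continuous_ofReal.tendsto 0).comp tendsto_inv_atTop_zero).mul_const _
    simp only [Complex.ofReal_zero, zero_mul] at this
    refine this.congr fun y => ?_
    simp [mul_comm]
  have t1 : Tendsto (fun y : ℝ => ‖F w * ((I * y : ℂ))⁻¹ - F (I * y) / (I * y)‖ ^ 2 * w.im) atTop
      (𝓝 (‖F w * 0 - 1‖ ^ 2 * w.im)) :=
    ((((hinv.const_mul (F w)).sub hl).norm).pow 2).mul_const _
  have t2 : Tendsto (fun y : ℝ => ‖w * ((I * y : ℂ))⁻¹ - 1‖ ^ 2 * ((F w).im * (F (I * y) / (I * y)).re)) atTop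
      (𝓝 (‖w * 0 - 1‖ ^ 2 * ((F w).im * (1:ℂ).re))) :=
    ((((hinv.const_mul w).sub_const 1).norm).pow 2).mul
      (((Complex.continuous_re.tendsto _).comp hl).const_mul _)
  have := le_of_tendsto_of_tendsto t1 t2 ?_
  · simpa using this
  filter_upwards [eventually_gt_atTop 0] with y hy
  have hy' : (y : ℂ) ≠ 0 := by exact_mod_cast hy.ne'
  have hIy : (I * y : ℂ) ∈ UHP := by simpa [mem_UHP] using hy
  have sp := schwarz_pick hd hm hw hIy
  have e1 : F w * ((I * y : ℂ))⁻¹ - F (I * y) / (I * y) = (F w - F (I * y)) / (I * y) := by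
    rw [sub_div, div_eq_mul_inv (F w)]
  have e2 : w * ((I * y : ℂ))⁻¹ - 1 = (w - I * y) / (I * y) := by
    field_simp
  have e3 : (F (I * y) / (I * y)).re = (F (I * y)).im / y := by
    have : F (I * y) / (I * y) = (-I * F (I * y)) / (y : ℝ) := by
      field_simp; simp
    rw [this, Complex.div_ofReal_re]; simp
  rw [e1, e2, e3, norm_div, norm_div, div_pow, div_pow]
  have e4 : ‖(I * y : ℂ)‖ = y := by simp [abs_of_pos hy]
  rw [e4]
  simp only [Complex.mul_im, Complex.I_re, Complex.I_im, Complex.ofReal_re, Complex.ofReal_im] at sp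
  have : ‖F w - F (I * y)‖ ^ 2 / y ^ 2 * w.im = (‖F w - F (I * y)‖ ^ 2 * (w.im * (0 * 0 + 1 * y))) / y ^ 3 := by
    field_simp; ring
  rw [this]
  have : ‖w - I * y‖ ^ 2 / y ^ 2 * ((F w).im * ((F (I * y)).im / y)) = ‖w - I * y‖ ^ 2 * ((F w).im * (F (I * y)).im) / y ^ 3 := by
    field_simp
  rw [this]
  gcongr

lemma julia_strict {F : ℂ → ℂ} (hd : DifferentiableOn ℂ F UHP) (hm : MapsTo F UHP UHP)
    (hna : ¬ Set.BijOn F UHP UHP)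
    (hl : Tendsto (fun y : ℝ => F (Complex.I * y) / (Complex.I * y)) atTop (𝓝 1))
    {w : ℂ} (hw : w ∈ UHP) : w.im < (F w).im := by
  refine lt_of_le_of_ne (julia hd hm hl hw) fun heq => hna ?_
  have hgd : DifferentiableOn ℂ (fun z => F z - z) UHP := hd.sub differentiableOn_id
  have han : AnalyticOnNhd ℂ (fun z => F z - z) UHP := hgd.analyticOnNhd isOpen_UHP
  rcases han.is_constant_or_isOpen isPreconnected_UHP with ⟨r, hr⟩ | hop
  · have hr0 : r.im = 0 := by rw [← hr w hw]; simp [heq]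
    have hF : ∀ z ∈ UHP, F z = z + r := fun z hz => by rw [← hr z hz]; ring
    refine ⟨hm, ?_, ?_⟩
    · intro x hx y hy hxy
      rw [hF x hx, hF y hy] at hxy
      exact add_right_cancel hxy
    · intro y hy
      have : y - r ∈ UHP := by rw [mem_UHP] at hy ⊢; simpa [hr0] using hy
      exact ⟨y - r, this, by rw [hF _ this]; ring⟩
  · exfalso
    have ho := hop UHP Subset.rfl isOpen_UHP
    have hmem : (F w - w) ∈ (fun z => F z - z) '' UHP := ⟨w, hw, rfl⟩
    have hcont : Tendsto (fun t : ℝ => (F w - w) - t * I) (𝓝[>] 0) (𝓝 (F w - w)) := by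
      have : Continuous (fun t : ℝ => (F w - w) - t * I) := by fun_prop
      have := this.tendsto 0
      simp only [Complex.ofReal_zero, zero_mul, sub_zero] at this
      exact this.mono_left nhdsWithin_le_nhds
    obtain ⟨t, ⟨u, hu, hut⟩, ht⟩ := ((hcont.eventually (ho.mem_nhds hmem)).and self_mem_nhdsWithin).exists
    have h1 := julia hd hm hl hu
    have h2 := congrArg Complex.im hut
    simp [heq] at h2
    have : (0:ℝ) < t := ht
    linarith

/-- Hyperbolic contraction towards `I`. -/
noncomputable def Tmap (s : ℝ) (w : ℂ) : ℂ := (w + I * s) / (1 - I * s * w)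

lemma Tmap_normSq (s : ℝ) (w : ℂ) :
    Complex.normSq (1 - I * s * w) = (1 + s * w.im) ^ 2 + s ^ 2 * w.re ^ 2 := by
  simp [Complex.normSq_apply]; ring

lemma Tmap_den_pos {s : ℝ} (hs : 0 < s) {w : ℂ} (hw : w ∈ UHP) :
    0 < (1 + s * w.im) ^ 2 + s ^ 2 * w.re ^ 2 := by
  have : 0 < w.im := hw
  positivity

lemma Tmap_den_ne {s : ℝ} (hs : 0 < s) {w : ℂ} (hw : w ∈ UHP) : 1 - I * s * w ≠ 0 := by
  rw [← Complex.normSq_pos, Tmap_normSq]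
  exact Tmap_den_pos hs hw

lemma Tmap_im (s : ℝ) (w : ℂ) : (Tmap s w).im =
    ((w.im + s) * (1 + s * w.im) + s * w.re ^ 2) / ((1 + s * w.im) ^ 2 + s ^ 2 * w.re ^ 2) := by
  rw [Tmap, Complex.div_im, ← sub_div, Tmap_normSq]
  congr 1
  simp
  ring

lemma Tmap_im_ge {s : ℝ} (hs : 0 < s) (hs1 : s ≤ 1) {w : ℂ} (hw : w ∈ UHP) :
    s ≤ (Tmap s w).im := by
  have h0 : 0 < w.im := hw
  rw [Tmap_im, le_div_iff₀ (Tmap_den_pos hs hw)]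
  have h1 : s ^ 2 ≤ 1 := by nlinarith
  have h2 : 0 ≤ (1 - s ^ 2) * (w.im * (1 + s * w.im)) := by
    have : 0 ≤ 1 - s ^ 2 := by linarith
    positivity
  have h3 : 0 ≤ (1 - s ^ 2) * (s * w.re ^ 2) := by
    have : 0 ≤ 1 - s ^ 2 := by linarith
    positivity
  nlinarith

lemma Tmap_norm_le {s : ℝ} (hs : 0 < s) (hs1 : s ≤ 1) {w : ℂ} (hw : w ∈ UHP) :
    ‖Tmap s w‖ ≤ 1 / s := by
  have h0 : 0 < w.im := hw
  have hne := norm_pos_iff.2 (Tmap_den_ne hs hw)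
  rw [Tmap, norm_div, div_le_div_iff₀ hne hs]
  refine le_of_sq_le_sq ?_ (by positivity)
  rw [mul_pow, one_mul, ← Complex.normSq_eq_norm_sq, ← Complex.normSq_eq_norm_sq, Tmap_normSq]
  simp [Complex.normSq_apply]
  have h1 : s ^ 2 ≤ 1 := by nlinarith
  nlinarith [mul_pos hs h0]

lemma Tmap_im_ge' {s c : ℝ} (hs : 0 < s) (hs1 : s ≤ 1) (hc : 0 < c) {w : ℂ} (hw : c < w.im) :
    min (c / (1 + c)) 1 ≤ (Tmap s w).im := by
  have h0 : 0 < w.im := hc.trans hw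
  rw [Tmap_im, le_div_iff₀ (Tmap_den_pos hs h0)]
  set m := min (c / (1 + c)) 1 with hm
  have hm0 : 0 ≤ m := by positivity
  have hm1 : m ≤ 1 := min_le_right _ _
  have hm2 : m * (1 + c) ≤ c := by
    have : m ≤ c / (1 + c) := min_le_left _ _
    rwa [le_div_iff₀ (by linarith)] at this
  have hm3 : m * (1 + s * w.im) ≤ w.im := by
    have : m * c ≤ m * w.im := by gcongr
    have h5 : m * (s * w.im) ≤ m * w.im := by
      gcongr
      nlinarith
    nlinarith
  have h4 : m * (1 + s * w.im) * (1 + s * w.im) ≤ w.im * (1 + s * w.im) := by gcongr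
  have h5 : m * (s ^ 2 * w.re ^ 2) ≤ s * w.re ^ 2 := by
    have : m * s ≤ 1 := by nlinarith
    nlinarith [mul_nonneg hs.le (sq_nonneg w.re)]
  have h6 : 0 ≤ s * (1 + s * w.im) := by positivity
  nlinarith

lemma Tmap_diff {s : ℝ} (hs : 0 < s) : DifferentiableOn ℂ (Tmap s) UHP := by
  intro w hw
  have h1 := Tmap_den_ne hs hw
  apply DifferentiableAt.differentiableWithinAt
  unfold Tmap
  fun_prop (disch := assumption)

lemma Tmap_tendsto {ι : Type*} {l : Filter ι} {s : ι → ℝ} {v : ι → ℂ} {a : ℂ}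
    (hs : Tendsto s l (𝓝 0)) (hv : Tendsto v l (𝓝 a)) :
    Tendsto (fun n => Tmap (s n) (v n)) l (𝓝 a) := by
  have hs' : Tendsto (fun n => (s n : ℂ)) l (𝓝 ((0 : ℝ) : ℂ)) :=
    (Complex.continuous_ofReal.tendsto 0).comp hs
  have h1 : Tendsto (fun n => v n + I * s n) l (𝓝 (a + I * ((0 : ℝ) : ℂ))) :=
    hv.add (hs'.const_mul I)
  have h2 : Tendsto (fun n => 1 - I * s n * v n) l (𝓝 (1 - I * ((0 : ℝ) : ℂ) * a)) :=
    ((hs'.const_mul I).mul hv).const_sub 1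
  have := h1.div h2 (by simp)
  simp only [Complex.ofReal_zero, mul_zero, add_zero, zero_mul, sub_zero, div_one] at this
  exact this

lemma fixed_aux {f : ℂ → ℂ} {c s : ℝ} (hc0 : 0 < c) (hd : DifferentiableOn ℂ f UHP)
    (hc : ∀ w ∈ UHP, c < (f w).im) (hs : 0 < s) (hs1 : s ≤ 1) :
    ∃ w ∈ UHP, Tmap s (f w) = w := by
  have hfm : MapsTo f UHP UHP := fun w hw => hc0.trans (hc w hw)
  have hTm : MapsTo (Tmap s) UHP UHP := fun w hw => hs.trans_le (Tmap_im_ge hs hs1 hw)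
  set g := fun w => Tmap s (f w) with hg
  have hgd : DifferentiableOn ℂ g UHP := (Tmap_diff hs).comp hd hfm
  have hgm : MapsTo g UHP UHP := hTm.comp hfm
  set K : Set ℂ := Metric.closedBall 0 (1 / s) ∩ {z | s ≤ z.im} with hK
  have hKc : IsCompact K := (isCompact_closedBall _ _).inter_right
    (isClosed_le continuous_const Complex.continuous_im)
  have hKU : K ⊆ UHP := fun z hz => hs.trans_le hz.2
  have hgK : ∀ w ∈ UHP, g w ∈ K := fun w hw =>
    ⟨by simpa using Tmap_norm_le hs hs1 (hfm hw), Tmap_im_ge hs hs1 (hfm hw)⟩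
  have hKn : K.Nonempty := ⟨g I, hgK I (by simp [mem_UHP])⟩
  have hcont : ContinuousOn (fun w => ‖w - g w‖ ^ 2 / (w.im * (g w).im)) K := by
    have hgc : ContinuousOn g K := hgd.continuousOn.mono hKU
    refine ContinuousOn.div (((continuousOn_id.sub hgc).norm).pow 2)
      ((Complex.continuous_im.continuousOn).mul (Complex.continuous_im.comp_continuousOn hgc)) ?_
    intro w hw
    exact (mul_pos (hKU hw) (hgm (hKU hw))).ne'
  obtain ⟨w, hwK, hmin⟩ := hKc.exists_isMinOn hKn hcont
  have hw := hKU hwK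
  refine ⟨w, hw, ?_⟩
  by_contra hne
  have hgw := hgm hw
  have hm := hmin (hgK w hw)
  simp only [mem_ofPred_eq] at hm
  have h1 := schwarz_pick (Tmap_diff hs) hTm (hfm hw) (hfm hgw)
  have h2 := schwarz_pick_shift hd hc hw hgw
  have c1 := hc w hw
  have c2 := hc _ hgw
  have p1 : 0 < w.im := hw
  have p2 : 0 < (g w).im := hgw
  have p3 : 0 < (g (g w)).im := hgm hgw
  rw [div_le_div_iff₀ (by positivity) (by positivity)] at hm
  have e1 : Tmap s (f w) = g w := rfl
  have e2 : Tmap s (f (g w)) = g (g w) := rfl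
  rw [e1, e2] at h1
  have hpos : 0 < ‖w - g w‖ ^ 2 := by
    have := norm_pos_iff.2 (sub_ne_zero.2 (Ne.symm hne))
    positivity
  set D0 := ‖w - g w‖ ^ 2
  set D1 := ‖f w - f (g w)‖ ^ 2
  set D2 := ‖g w - g (g w)‖ ^ 2
  set A := (f w).im
  set B := (f (g w)).im
  have hAB : (A - c) * (B - c) < A * B := by nlinarith
  have q1 : D1 * (w.im * (g w).im) < D0 * (A * B) := lt_of_le_of_lt h2 (by gcongr)
  have q2 : D2 * (A * B) * (w.im * (g w).im) < D0 * (A * B) * ((g w).im * (g (g w)).im) := by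
    calc D2 * (A * B) * (w.im * (g w).im)
        ≤ (D1 * ((g w).im * (g (g w)).im)) * (w.im * (g w).im) := by gcongr
      _ = (D1 * (w.im * (g w).im)) * ((g w).im * (g (g w)).im) := by ring
      _ < _ := by gcongr
  have hABp : 0 < A * B := mul_pos (by linarith) (by linarith)
  have : D0 * ((g w).im * (g (g w)).im) * (A * B) ≤ D2 * (w.im * (g w).im) * (A * B) := by
    gcongr
  linarith

/-- Existence of fixed points. -/
lemma fixed_exists {f : ℂ → ℂ} {c : ℝ} (hc0 : 0 < c) (hd : DifferentiableOn ℂ f UHP)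
    (hc : ∀ w ∈ UHP, c < (f w).im) {w₀ : ℂ} (hw₀ : w₀ ∈ UHP) (hlt : (f w₀).im < w₀.im) :
    ∃ w ∈ UHP, f w = w := by
  have hfm : MapsTo f UHP UHP := fun w hw => hc0.trans (hc w hw)
  set s : ℕ → ℝ := fun n => 1 / ((n : ℝ) + 1) with hsdef
  have hs : ∀ n, 0 < s n := fun n => by simp only [hsdef]; positivity
  have hs1 : ∀ n, s n ≤ 1 := fun n => by
    simp only [hsdef]
    rw [div_le_one (by positivity)]
    have : (0:ℝ) ≤ n := by positivity
    linarith
  have hslim : Tendsto s atTop (𝓝 0) := tendsto_one_div_add_atTop_nhds_zero_nat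
  choose w hw hfix using fun n => fixed_aux hc0 hd hc (hs n) (hs1 n)
  set m := min (c / (1 + c)) 1 with hm
  have hm0 : 0 < m := by positivity
  have hwm : ∀ n, m ≤ (w n).im := fun n => by
    have := Tmap_im_ge' (hs n) (hs1 n) hc0 (hc _ (hw n))
    rwa [hfix n] at this
  by_cases hinf : Tendsto (fun n => ‖w n‖) atTop atTop
  · exfalso
    have hwinv : Tendsto (fun n => (w n)⁻¹) atTop (𝓝 0) :=
      tendsto_inv₀_cobounded.comp (tendsto_norm_atTop_iff_cobounded.1 hinf)
    have hT : Tendsto (fun n => Tmap (s n) (f w₀)) atTop (𝓝 (f w₀)) :=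
      Tmap_tendsto hslim tendsto_const_nhds
    have t1 : Tendsto (fun n => ‖Tmap (s n) (f w₀) * (w n)⁻¹ - 1‖ ^ 2 * w₀.im) atTop
        (𝓝 (‖f w₀ * 0 - 1‖ ^ 2 * w₀.im)) :=
      ((((hT.mul hwinv).sub_const 1).norm).pow 2).mul_const _
    have t2 : Tendsto (fun n => ‖w₀ * (w n)⁻¹ - 1‖ ^ 2 * (Tmap (s n) (f w₀)).im) atTop
        (𝓝 (‖w₀ * 0 - 1‖ ^ 2 * (f w₀).im)) :=
      ((((hwinv.const_mul w₀).sub_const 1).norm).pow 2).mul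
        ((Complex.continuous_im.tendsto _).comp hT)
    have := le_of_tendsto_of_tendsto' t1 t2 ?_
    · simp at this
      linarith
    intro n
    have hTm : MapsTo (Tmap (s n)) UHP UHP :=
      fun w hw => (hs n).trans_le (Tmap_im_ge (hs n) (hs1 n) hw)
    have sp := schwarz_pick (g := fun w => Tmap (s n) (f w)) ((Tmap_diff (hs n)).comp hd hfm)
      (hTm.comp hfm) hw₀ (hw n)
    simp only [hfix n] at sp
    have hp : 0 < (w n).im := hw n
    have hne : w n ≠ 0 := by
      intro h; rw [h] at hp; simp at hp
    have hnp := norm_pos_iff.2 hne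
    have e1 : Tmap (s n) (f w₀) * (w n)⁻¹ - 1 = (Tmap (s n) (f w₀) - w n) / w n := by
      field_simp
    have e2 : w₀ * (w n)⁻¹ - 1 = (w₀ - w n) / w n := by field_simp
    rw [e1, e2, norm_div, norm_div, div_pow, div_pow, div_mul_eq_mul_div, div_mul_eq_mul_div]
    refine div_le_div_of_nonneg_right ?_ (by positivity)
    refine le_of_mul_le_mul_right ?_ hp
    linarith
  · rw [tendsto_atTop] at hinf
    push Not at hinf
    obtain ⟨R, hR⟩ := hinf
    have hKc : IsCompact (Metric.closedBall (0:ℂ) R ∩ {z | m ≤ z.im}) :=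
      (isCompact_closedBall _ _).inter_right (isClosed_le continuous_const Complex.continuous_im)
    have hfr : ∃ᶠ n in atTop, w n ∈ Metric.closedBall (0:ℂ) R ∩ {z | m ≤ z.im} := by
      refine hR.mono fun n hn => ⟨?_, hwm n⟩
      simpa using (by linarith : ‖w n‖ ≤ R)
    obtain ⟨a, ha, φ, hφ, hlim⟩ := hKc.tendsto_subseq' hfr
    have haU : a ∈ UHP := hm0.trans_le ha.2
    refine ⟨a, haU, ?_⟩
    have hfa : Tendsto (fun n => f (w (φ n))) atTop (𝓝 (f a)) :=
      ((hd.differentiableAt (isOpen_UHP.mem_nhds haU)).continuousAt.tendsto).comp hlim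
    have h2 := Tmap_tendsto (hslim.comp hφ.tendsto_atTop) hfa
    refine tendsto_nhds_unique h2 (hlim.congr fun n => ?_)
    exact (hfix (φ n)).symm

/-- A composition of two maps, the first of which is `o(y)` along the imaginary axis and has
imaginary part bounded below, cannot increase all imaginary parts. -/
lemma no_escape {h₁ h₂ : ℂ → ℂ} {c : ℝ} (hc0 : 0 < c) (hd₁ : DifferentiableOn ℂ h₁ UHP)
    (hc : ∀ w ∈ UHP, c < (h₁ w).im) (hd₂ : DifferentiableOn ℂ h₂ UHP) (hm₂ : MapsTo h₂ UHP UHP)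
    (hl : Tendsto (fun y : ℝ => ‖h₁ (I * y)‖ / y) atTop (𝓝 0)) :
    ∃ w ∈ UHP, (h₂ (h₁ w)).im < w.im := by
  by_contra! hcon
  have hm₁ : MapsTo h₁ UHP UHP := fun w hw => hc0.trans (hc w hw)
  have hI : I ∈ UHP := by simp [mem_UHP]
  set b := h₂ I with hb
  have hbp : 0 < b.im := hm₂ hI
  have hbn : 0 < ‖b‖ := hbp.trans_le (Complex.im_le_norm b)
  set C := 4 * b.im * (1 + 1 / c) ^ 2 with hC
  have hCp : 0 < C := by positivity
  have hIy : ∀ y : ℝ, 0 < y → (I * y : ℂ) ∈ UHP := fun y hy => by simpa [mem_UHP] using hy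
  have imIy : ∀ y : ℝ, (I * y : ℂ).im = y := fun y => by simp
  have step1 : ∀ y : ℝ, 2 * ‖b‖ ≤ y → y * (h₁ (I * y)).im ≤ C * ‖h₁ (I * y)‖ ^ 2 := by
    intro y hy
    have hy0 : 0 < y := by linarith
    have hU := hIy y hy0
    have sp := schwarz_pick hd₂ hm₂ (hm₁ hU) hI
    rw [← hb] at sp
    set H := h₁ (I * y)
    set f := h₂ H
    have hf : y ≤ f.im := by simpa using hcon _ hU
    have hHc : c < H.im := hc _ hU
    have hfn : f.im ≤ ‖f‖ := Complex.im_le_norm f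
    have hHn : H.im ≤ ‖H‖ := Complex.im_le_norm H
    have a1 : ‖f‖ / 2 ≤ ‖f - b‖ := by
      have := norm_sub_norm_le f b
      linarith
    have a2 : ‖H - I‖ ≤ (1 + 1 / c) * ‖H‖ := by
      have h1 := norm_sub_le H I
      have h2 : 1 ≤ 1 / c * ‖H‖ := by
        rw [div_mul_eq_mul_div, one_mul, le_div_iff₀ hc0]; linarith
      simp at h1
      linarith
    simp only [Complex.I_im, mul_one] at sp
    have b1 : (‖f‖ / 2) ^ 2 * H.im ≤ ‖f - b‖ ^ 2 * H.im := by
      have : 0 < H.im := hc0.trans hHc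
      gcongr
    have b2 : ‖H - I‖ ^ 2 * (f.im * b.im) ≤ ((1 + 1 / c) * ‖H‖) ^ 2 * (f.im * b.im) := by
      have : 0 < f.im := by linarith
      gcongr
    have b3 : f.im * y ≤ ‖f‖ ^ 2 := by nlinarith
    have b4 : f.im * y * H.im ≤ ‖f‖ ^ 2 * H.im := by
      have : 0 < H.im := hc0.trans hHc
      gcongr
    have hfp : 0 < f.im := by linarith
    refine le_of_mul_le_mul_left ?_ hfp
    rw [hC]
    nlinarith
  -- now compare two points
  have step2 : ∀ y Y : ℝ, 2 * ‖b‖ ≤ y → y ≤ Y →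
      ‖h₁ (I * y) - h₁ (I * Y)‖ * y ≤ C * (‖h₁ (I * y)‖ * ‖h₁ (I * Y)‖) := by
    intro y Y hy hyY
    have hy0 : 0 < y := by linarith
    have hY0 : 0 < Y := by linarith
    have s1 := step1 y hy
    have s2 := step1 Y (hy.trans hyY)
    have sp := schwarz_pick hd₁ hm₁ (hIy y hy0) (hIy Y hY0)
    have p1 : 0 < (h₁ (I * y)).im := hm₁ (hIy y hy0)
    have p2 : 0 < (h₁ (I * Y)).im := hm₁ (hIy Y hY0)
    have e : ‖(I * y - I * Y : ℂ)‖ ≤ Y := by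
      have : (I * y - I * Y : ℂ) = I * ((y - Y : ℝ) : ℂ) := by push_cast; ring
      rw [this, norm_mul, Complex.norm_I, one_mul, Complex.norm_real, Real.norm_eq_abs, abs_le]
      constructor <;> linarith
    rw [imIy, imIy] at sp
    refine le_of_sq_le_sq ?_ (by positivity)
    rw [mul_pow, mul_pow, mul_pow]
    set N1 := ‖h₁ (I * y)‖
    set N2 := ‖h₁ (I * Y)‖
    set D := ‖h₁ (I * y) - h₁ (I * Y)‖
    have q : D ^ 2 * (y * Y) ≤ Y ^ 2 * ((h₁ (I * y)).im * (h₁ (I * Y)).im) := sp.trans (by gcongr)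
    have r : (y * (h₁ (I * y)).im) * (Y * (h₁ (I * Y)).im) ≤ (C * N1 ^ 2) * (C * N2 ^ 2) := by
      gcongr
    refine le_of_mul_le_mul_right ?_ (by positivity : 0 < Y ^ 2)
    calc D ^ 2 * y ^ 2 * Y ^ 2 = (D ^ 2 * (y * Y)) * (y * Y) := by ring
      _ ≤ (Y ^ 2 * ((h₁ (I * y)).im * (h₁ (I * Y)).im)) * (y * Y) := by gcongr
      _ = ((y * (h₁ (I * y)).im) * (Y * (h₁ (I * Y)).im)) * Y ^ 2 := by ring
      _ ≤ ((C * N1 ^ 2) * (C * N2 ^ 2)) * Y ^ 2 := by gcongr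
      _ = _ := by ring
  obtain ⟨y, hy1, hy2⟩ := ((hl.eventually (gt_mem_nhds (by positivity : 0 < 1 / (2 * C)))).and
    (eventually_ge_atTop (2 * ‖b‖))).exists
  have hy0 : 0 < y := by linarith
  rw [div_lt_div_iff₀ hy0 (by positivity)] at hy1
  set N := ‖h₁ (I * y)‖ with hN
  have hbound : ∀ Y, y ≤ Y → ‖h₁ (I * Y)‖ ≤ 2 * N := by
    intro Y hY
    have h := step2 y Y hy2 hY
    have h2 := norm_sub_norm_le (h₁ (I * Y)) (h₁ (I * y))
    rw [norm_sub_rev] at h2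
    rw [← hN] at h h2
    have h3 : (‖h₁ (I * Y)‖ - N) * y ≤ C * (N * ‖h₁ (I * Y)‖) :=
      le_trans (by gcongr) h
    refine le_of_mul_le_mul_right ?_ hy0
    nlinarith [norm_nonneg (h₁ (I * Y))]
  set Y := y + C * (2 * N) ^ 2 / c + 1 with hY
  have hYy : y ≤ Y := by
    have : 0 ≤ C * (2 * N) ^ 2 / c := by positivity
    linarith
  have h1 := step1 Y (hy2.trans hYy)
  have h2 := hbound Y hYy
  have h3 := hc _ (hIy Y (hy0.trans_le hYy))
  have h4 : C * ‖h₁ (I * Y)‖ ^ 2 ≤ C * (2 * N) ^ 2 := by gcongr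
  have h5 : Y * c ≤ Y * (h₁ (I * Y)).im := by
    have : 0 < Y := hy0.trans_le hYy
    gcongr
  have h6 : Y * c = y * c + C * (2 * N) ^ 2 + c := by
    rw [hY]; field_simp
  nlinarith [mul_pos hy0 hc0]

lemma deriv_ne_one {f : ℂ → ℂ} {c : ℝ} (hc0 : 0 < c) (hd : DifferentiableOn ℂ f UHP)
    (hc : ∀ w ∈ UHP, c < (f w).im) {a f' : ℂ} (ha : a ∈ UHP)
    (hfa : f a = a) (hf' : HasDerivAt f f' a) : f' ≠ 1 := by
  intro h1
  have hca := hc a ha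
  rw [hfa] at hca
  have hsl := hasDerivAt_iff_tendsto_slope.1 hf'
  have hid : Tendsto (fun x : ℂ => x) (𝓝[≠] a) (𝓝 a) := nhdsWithin_le_nhds
  have hfc : Tendsto f (𝓝[≠] a) (𝓝 (f a)) := hf'.continuousAt.tendsto.mono_left nhdsWithin_le_nhds
  have t1 : Tendsto (fun x => ‖slope f a x‖ ^ 2 * (x.im * a.im)) (𝓝[≠] a)
      (𝓝 (‖f'‖ ^ 2 * (a.im * a.im))) :=
    (hsl.norm.pow 2).mul (((Complex.continuous_im.tendsto _).comp hid).mul_const _)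
  have t2 : Tendsto (fun x => ((f x).im - c) * (a.im - c)) (𝓝[≠] a)
      (𝓝 (((f a).im - c) * (a.im - c))) :=
    (((Complex.continuous_im.tendsto _).comp hfc).sub_const _).mul_const _
  have key := le_of_tendsto_of_tendsto t1 t2 (by
    have hU : ∀ᶠ x in 𝓝[≠] a, x ∈ UHP := hid.eventually (isOpen_UHP.mem_nhds ha)
    filter_upwards [hU, self_mem_nhdsWithin] with x hx hxa
    have sp := schwarz_pick_shift hd hc hx ha
    have hpos : 0 < ‖x - a‖ ^ 2 := by
      have := norm_pos_iff.2 (sub_ne_zero.2 hxa)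
      positivity
    rw [slope_def_field, norm_div, div_pow, div_mul_eq_mul_div, div_le_iff₀ hpos]
    rw [hfa] at sp ⊢
    linarith)
  rw [h1, hfa] at key
  simp at key
  nlinarith

lemma implicit_diff {f : ℂ × ℂ → ℂ} {ω : ℂ → ℂ} {z₀ f' : ℂ} (hz₀ : z₀ ∈ UHP)
    (hω : ∀ z ∈ UHP, ω z ∈ UHP)
    (huniq : ∀ z ∈ UHP, ∀ w ∈ UHP, f (z, w) = w → w = ω z)
    (hfix : f (z₀, ω z₀) = ω z₀)
    (hf : ContDiffAt ℂ 1 f (z₀, ω z₀))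
    (hf' : HasDerivAt (fun w => f (z₀, w)) f' (ω z₀)) (hne : f' ≠ 1) :
    DifferentiableAt ℂ ω z₀ := by
  set Φ : ℂ × ℂ → ℂ := fun p => f p - p.2 with hΦ
  have hΦc : ContDiffAt ℂ 1 Φ (z₀, ω z₀) := hf.sub contDiffAt_snd
  have hfd : HasFDerivAt Φ (fderiv ℂ Φ (z₀, ω z₀)) (z₀, ω z₀) :=
    (hΦc.differentiableAt (by simp)).hasFDerivAt
  set L := fderiv ℂ Φ (z₀, ω z₀) ∘L .inr ℂ ℂ ℂ with hL
  have hL1 : L 1 = f' - 1 := by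
    have h1 : HasDerivAt (fun w : ℂ => ((z₀, w) : ℂ × ℂ)) (0, 1) (ω z₀) :=
      (hasDerivAt_const _ _).prodMk (hasDerivAt_id _)
    have h2 : HasDerivAt (fun w : ℂ => Φ (z₀, w)) (fderiv ℂ Φ (z₀, ω z₀) (0, 1)) (ω z₀) :=
      hfd.comp_hasDerivAt (ω z₀) h1
    have h3 : HasDerivAt (fun w : ℂ => Φ (z₀, w)) (f' - 1) (ω z₀) := hf'.sub (hasDerivAt_id _)
    simpa [hL] using h2.unique h3
  have hL0 : L 1 ≠ 0 := by rw [hL1]; exact sub_ne_zero.2 hne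
  have hLinv : L.IsInvertible := by
    refine ContinuousLinearMap.IsInvertible.of_inverse
      (g := (L 1)⁻¹ • ContinuousLinearMap.id ℂ ℂ) ?_ ?_
    · ext; simp [hL0]
    · ext; simp [hL0]
  set ψ := hΦc.implicitFunction (by simp) hLinv with hψ
  have hψ0 : ψ z₀ = ω z₀ := hΦc.implicitFunction_apply_self (by simp) hLinv
  have hψd : DifferentiableAt ℂ ψ z₀ :=
    (hΦc.hasStrictFDerivAt_implicitFunction (by simp) hLinv).hasFDerivAt.differentiableAt
  have hev : ∀ᶠ x in 𝓝 z₀, Φ (x, ψ x) = Φ (z₀, ω z₀) :=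
    hΦc.eventually_apply_implicitFunction (by simp) hLinv
  have hU : ∀ᶠ x in 𝓝 z₀, ψ x ∈ UHP :=
    hψd.continuousAt.tendsto.eventually (isOpen_UHP.mem_nhds (by rw [hψ0]; exact hω _ hz₀))
  refine hψd.congr_of_eventuallyEq ?_
  filter_upwards [hev, hU, isOpen_UHP.mem_nhds hz₀] with x h1 h2 h3
  refine (huniq x h3 _ h2 ?_).symm
  simp only [hΦ, hfix, sub_self] at h1
  exact sub_eq_zero.1 h1

lemma sector_bound {G : ℂ → ℂ} (hd : DifferentiableOn ℂ G UHP) (hm : MapsTo G UHP UHP)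
    {C : ℝ} (hC : 0 < C) {w : ℂ} (hw : w ∈ UHP) (hsec : ‖w‖ ≤ C * w.im) :
    ‖G w‖ ≤ (2 + 4 * C) * ‖G (I * (‖w‖ : ℝ))‖ := by
  have hwp : 0 < w.im := hw
  have hn : 0 < ‖w‖ := hwp.trans_le (Complex.im_le_norm w)
  have hU : (I * (‖w‖ : ℝ) : ℂ) ∈ UHP := by simpa [mem_UHP] using norm_pos_iff.1 hn
  have sp := schwarz_pick hd hm hw hU
  have e : (I * (‖w‖ : ℝ) : ℂ).im = ‖w‖ := by simp
  have e2 : ‖w - I * (‖w‖ : ℝ)‖ ≤ 2 * ‖w‖ := by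
    refine (norm_sub_le _ _).trans ?_
    simp
    linarith
  rw [e] at sp
  set A := ‖G w‖
  set B := ‖G (I * (‖w‖ : ℝ))‖
  have hA : (G w).im ≤ A := Complex.im_le_norm _
  have hB : (G (I * (‖w‖ : ℝ))).im ≤ B := Complex.im_le_norm _
  have hA0 : 0 < (G w).im := hm hw
  have hB0 : 0 < (G (I * (‖w‖ : ℝ))).im := hm hU
  have hAp := hA0.trans_le hA
  have hBp := hB0.trans_le hB
  have hAB : (A - B) ^ 2 ≤ ‖G w - G (I * (‖w‖ : ℝ))‖ ^ 2 := by
    have := abs_norm_sub_norm_le (G w) (G (I * (‖w‖ : ℝ)))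
    rw [← sq_abs (A - B)]
    gcongr
  have q : (A - B) ^ 2 * (‖w‖ * ‖w‖) ≤ (4 * C * (A * B)) * (‖w‖ * ‖w‖) := by
    calc (A - B) ^ 2 * (‖w‖ * ‖w‖) ≤ (A - B) ^ 2 * ((C * w.im) * ‖w‖) := by gcongr
      _ ≤ ‖G w - G (I * (‖w‖ : ℝ))‖ ^ 2 * ((C * w.im) * ‖w‖) := by gcongr
      _ = C * (‖G w - G (I * (‖w‖ : ℝ))‖ ^ 2 * (w.im * ‖w‖)) := by ring
      _ ≤ C * (‖w - I * (‖w‖ : ℝ)‖ ^ 2 * ((G w).im * (G (I * (‖w‖ : ℝ))).im)) := by gcongr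
      _ ≤ C * ((2 * ‖w‖) ^ 2 * (A * B)) := by gcongr
      _ = _ := by ring
  have q2 := le_of_mul_le_mul_right q (by positivity)
  refine le_of_mul_le_mul_right ?_ hAp
  nlinarith

lemma sector_limit {G : ℂ → ℂ} (hd : DifferentiableOn ℂ G UHP) (hm : MapsTo G UHP UHP)
    (hl : Tendsto (fun y : ℝ => ‖G (I * y)‖ / y) atTop (𝓝 0)) {u : ℝ → ℂ} {C : ℝ} (hC : 0 < C)
    (hu : ∀ᶠ y in atTop, y ≤ (u y).im ∧ ‖u y‖ ≤ C * y) :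
    Tendsto (fun y : ℝ => ‖G (u y)‖ / y) atTop (𝓝 0) := by
  have hinf : Tendsto (fun y => ‖u y‖) atTop atTop := by
    refine tendsto_atTop_mono' _ ?_ tendsto_id
    filter_upwards [hu] with y hy
    exact hy.1.trans (Complex.im_le_norm _)
  have h1 : Tendsto (fun y => (2 + 4 * C) * C * (‖G (I * (‖u y‖ : ℝ))‖ / ‖u y‖)) atTop
      (𝓝 ((2 + 4 * C) * C * 0)) := (hl.comp hinf).const_mul _
  rw [mul_zero] at h1
  refine squeeze_zero' ?_ ?_ h1
  · filter_upwards [eventually_gt_atTop 0] with y hy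
    positivity
  · filter_upwards [hu, eventually_gt_atTop 0] with y hy hy0
    have hU : u y ∈ UHP := hy0.trans_le hy.1
    have hb := sector_bound hd hm hC hU (hy.2.trans (by gcongr; exact hy.1))
    have hn : 0 < ‖u y‖ := (hy0.trans_le hy.1).trans_le (Complex.im_le_norm _)
    rw [div_le_iff₀ hy0]
    refine hb.trans ?_
    have : (2 + 4 * C) * C * (‖G (I * (‖u y‖ : ℝ))‖ / ‖u y‖) * y =
      (2 + 4 * C) * ‖G (I * (‖u y‖ : ℝ))‖ * (C * y / ‖u y‖) := by field_simp
    rw [this]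
    refine le_mul_of_one_le_right (by positivity) ?_
    rw [one_le_div hn]
    exact hy.2

lemma lim_sub {F : ℂ → ℂ}
    (hl : Tendsto (fun y : ℝ => F (Complex.I * y) / (Complex.I * y)) atTop (𝓝 1)) :
    Tendsto (fun y : ℝ => ‖F (I * y) - I * y‖ / y) atTop (𝓝 0) := by
  have := (hl.sub_const 1).norm
  simp only [sub_self, norm_zero] at this
  refine this.congr' ?_
  filter_upwards [eventually_gt_atTop 0] with y hy
  have hy' : (y : ℂ) ≠ 0 := by exact_mod_cast hy.ne'
  have : F (I * y) / (I * y) - 1 = (F (I * y) - I * y) / (I * y) := by field_simp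
  rw [this, norm_div]
  simp [abs_of_pos hy]

lemma growth {ω : ℂ → ℂ} (hd : DifferentiableOn ℂ ω UHP) (hm : MapsTo ω UHP UHP) :
    ∃ C > 0, ∀ y : ℝ, 1 ≤ y → ‖ω (I * y)‖ ≤ C * y := by
  have hI : I ∈ UHP := by simp [mem_UHP]
  have hb : 0 < (ω I).im := hm hI
  have hbn : (ω I).im ≤ ‖ω I‖ := Complex.im_le_norm _
  refine ⟨6 * ‖ω I‖, by linarith, fun y hy => ?_⟩
  have hy0 : 0 < y := by linarith
  have hU : (I * y : ℂ) ∈ UHP := by simpa [mem_UHP] using hy0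
  have sp := schwarz_pick hd hm hU hI
  have e1 : (I * y : ℂ).im = y := by simp
  have e2 : ‖(I * y - I : ℂ)‖ ≤ y := by
    have : (I * y - I : ℂ) = I * ((y - 1 : ℝ) : ℂ) := by push_cast; ring
    rw [this, norm_mul, Complex.norm_I, one_mul, Complex.norm_real, Real.norm_eq_abs, abs_le]
    constructor <;> linarith
  rw [e1, Complex.I_im, mul_one] at sp
  by_contra! hlt
  set W := ω (I * y)
  have hW0 : 0 < W.im := hm hU
  have hWn : W.im ≤ ‖W‖ := Complex.im_le_norm _
  have h1 : ‖W‖ / 2 ≤ ‖W - ω I‖ := by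
    have := norm_sub_norm_le W (ω I)
    nlinarith
  have h2 : (‖W‖ / 2) ^ 2 * y ≤ y ^ 2 * (‖W‖ * ‖ω I‖) := by
    calc (‖W‖ / 2) ^ 2 * y ≤ ‖W - ω I‖ ^ 2 * y := by gcongr
      _ ≤ _ := sp
      _ ≤ _ := by gcongr
  have hWp := hW0.trans_le hWn
  have h3 : (‖W‖ * y) * ‖W‖ ≤ (‖W‖ * y) * (4 * ‖ω I‖ * y) := by nlinarith
  have h4 := le_of_mul_le_mul_left h3 (by positivity)
  nlinarith [mul_pos (hb.trans_le hbn) hy0]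

/-- Subordination result: given analytic `F₁, F₂ : ℂ⁺ → ℂ⁺`, neither a conformal
automorphism of `ℂ⁺`, with `F_j(iy)/(iy) → 1` as `y → ∞`, the map
`f(z,w) = F₂(F₁(w) − w + z) − (F₁(w) − w)` is a well-defined map into `ℂ⁺` for
`Im z ≥ 0`, `w ∈ ℂ⁺`, and there is a unique analytic self-map `ω` of `ℂ⁺` with
`f(z, ω(z)) = ω(z)` for all `z ∈ ℂ⁺`; moreover `ω(iy)/(iy) → 1` as `y → ∞`. -/
theorem first_subordination_result
    (F₁ F₂ : ℂ → ℂ)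
    (hd₁ : DifferentiableOn ℂ F₁ UHP) (hm₁ : Set.MapsTo F₁ UHP UHP)
    (hd₂ : DifferentiableOn ℂ F₂ UHP) (hm₂ : Set.MapsTo F₂ UHP UHP)
    (hna₁ : ¬ Set.BijOn F₁ UHP UHP) (hna₂ : ¬ Set.BijOn F₂ UHP UHP)
    (hl₁ : Tendsto (fun y : ℝ => F₁ (Complex.I * y) / (Complex.I * y)) atTop (𝓝 1))
    (hl₂ : Tendsto (fun y : ℝ => F₂ (Complex.I * y) / (Complex.I * y)) atTop (𝓝 1)) :
    (∀ z w : ℂ, 0 ≤ z.im → w ∈ UHP →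
        (F₁ w - w + z) ∈ UHP ∧ (F₂ (F₁ w - w + z) - (F₁ w - w)) ∈ UHP) ∧
    ∃ ω : ℂ → ℂ, DifferentiableOn ℂ ω UHP ∧ Set.MapsTo ω UHP UHP ∧
      (∀ z ∈ UHP, F₂ (F₁ (ω z) - ω z + z) - (F₁ (ω z) - ω z) = ω z) ∧
      Tendsto (fun y : ℝ => ω (Complex.I * y) / (Complex.I * y)) atTop (𝓝 1) ∧
      (∀ ω' : ℂ → ℂ, DifferentiableOn ℂ ω' UHP → Set.MapsTo ω' UHP UHP →
        (∀ z ∈ UHP, F₂ (F₁ (ω' z) - ω' z + z) - (F₁ (ω' z) - ω' z) = ω' z) →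
        Set.EqOn ω ω' UHP) := by
  have hs₁ : ∀ w ∈ UHP, w.im < (F₁ w).im := fun w hw => julia_strict hd₁ hm₁ hna₁ hl₁ hw
  have hs₂ : ∀ w ∈ UHP, w.im < (F₂ w).im := fun w hw => julia_strict hd₂ hm₂ hna₂ hl₂ hw
  have hu : ∀ z w : ℂ, 0 ≤ z.im → w ∈ UHP → z.im < (F₁ w - w + z).im := by
    intro z w _ hw
    have := hs₁ w hw
    simp
    linarith
  have hfim : ∀ z w : ℂ, 0 ≤ z.im → w ∈ UHP →
      z.im < (F₂ (F₁ w - w + z) - (F₁ w - w)).im := by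
    intro z w hz hw
    have h1 : (F₁ w - w + z) ∈ UHP := hz.trans_lt (hu z w hz hw)
    have h2 := hs₂ _ h1
    simp at h2 ⊢
    linarith
  refine ⟨fun z w hz hw => ⟨hz.trans_lt (hu z w hz hw), hz.trans_lt (hfim z w hz hw)⟩, ?_⟩
  have hG₁d : DifferentiableOn ℂ (fun w => F₁ w - w) UHP := hd₁.sub differentiableOn_id
  have hG₂d : DifferentiableOn ℂ (fun w => F₂ w - w) UHP := hd₂.sub differentiableOn_id
  have hG₁m : MapsTo (fun w => F₁ w - w) UHP UHP := fun w hw => by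
    have := hs₁ w hw
    simp [mem_UHP]; linarith
  have hG₂m : MapsTo (fun w => F₂ w - w) UHP UHP := fun w hw => by
    have := hs₂ w hw
    simp [mem_UHP]; linarith
  have hum : ∀ z ∈ UHP, MapsTo (fun w => F₁ w - w + z) UHP UHP := fun z hz w hw =>
    (mem_UHP.1 hz).trans (hu z w (mem_UHP.1 hz).le hw)
  have hfd : ∀ z ∈ UHP, DifferentiableOn ℂ (fun w => F₂ (F₁ w - w + z) - (F₁ w - w)) UHP :=
    fun z hz => (hd₂.comp (hG₁d.add_const z) (hum z hz)).sub hG₁d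
  have hfc : ∀ z ∈ UHP, ∀ w ∈ UHP, z.im < (F₂ (F₁ w - w + z) - (F₁ w - w)).im :=
    fun z hz w hw => hfim z w (mem_UHP.1 hz).le hw
  have hex : ∀ z ∈ UHP, ∃ w ∈ UHP, F₂ (F₁ w - w + z) - (F₁ w - w) = w := by
    intro z hz
    have hz0 : 0 < z.im := hz
    have hl : Tendsto (fun y : ℝ => ‖F₁ (I * y) - I * y + z‖ / y) atTop (𝓝 0) := by
      have h1 := (lim_sub hl₁).add (tendsto_inv_atTop_zero.const_mul ‖z‖)
      simp only [mul_zero, add_zero] at h1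
      refine squeeze_zero' ?_ ?_ h1
      · filter_upwards [eventually_gt_atTop 0] with y hy
        positivity
      · filter_upwards [eventually_gt_atTop 0] with y hy
        rw [← div_eq_mul_inv, ← add_div]
        gcongr
        exact norm_add_le _ _
    obtain ⟨w₀, hw₀, hlt⟩ := no_escape (h₁ := fun w => F₁ w - w + z) (h₂ := fun u => F₂ u - u + z)
      hz0 (hG₁d.add_const z) (fun w hw => hu z w hz0.le hw) (hG₂d.add_const z)
      (fun w hw => by
        have := hs₂ w hw
        simp [mem_UHP]; linarith) hl
    refine fixed_exists hz0 (hfd z hz) (hfc z hz) hw₀ ?_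
    convert hlt using 2
    ring
  choose! ω hω hfix using hex
  have huniq : ∀ z ∈ UHP, ∀ w ∈ UHP, F₂ (F₁ w - w + z) - (F₁ w - w) = w → w = ω z :=
    fun z hz w hw h => fixed_unique (mem_UHP.1 hz) (hfd z hz) (hfc z hz) hw (hω z hz) h (hfix z hz)
  have hωd : DifferentiableOn ℂ ω UHP := by
    intro z₀ hz₀
    apply DifferentiableAt.differentiableWithinAt
    have hw := hω z₀ hz₀
    have hder := ((hfd z₀ hz₀).differentiableAt (isOpen_UHP.mem_nhds hw)).hasDerivAt
    refine implicit_diff (f := fun p => F₂ (F₁ p.2 - p.2 + p.1) - (F₁ p.2 - p.2)) hz₀ hω huniq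
      (hfix z₀ hz₀) ?_ hder
      (deriv_ne_one (mem_UHP.1 hz₀) (hfd z₀ hz₀) (hfc z₀ hz₀) hw (hfix z₀ hz₀) hder)
    have a1 : ContDiffAt ℂ 1 (fun w => F₁ w - w) (ω z₀) :=
      (hG₁d.analyticAt (isOpen_UHP.mem_nhds hw)).contDiffAt
    have a2 : ContDiffAt ℂ 1 (fun p : ℂ × ℂ => F₁ p.2 - p.2) (z₀, ω z₀) :=
      ContDiffAt.comp (z₀, ω z₀) (g := fun w => F₁ w - w) (f := Prod.snd) a1 contDiffAt_snd
    have a3 : ContDiffAt ℂ 1 F₂ (F₁ (ω z₀) - ω z₀ + z₀) :=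
      (hd₂.analyticAt (isOpen_UHP.mem_nhds (hum z₀ hz₀ hw))).contDiffAt
    have a4 : ContDiffAt ℂ 1 (fun p : ℂ × ℂ => F₂ (F₁ p.2 - p.2 + p.1)) (z₀, ω z₀) :=
      ContDiffAt.comp (z₀, ω z₀) (g := F₂) (f := fun p : ℂ × ℂ => F₁ p.2 - p.2 + p.1) a3
        (a2.add contDiffAt_fst)
    exact a4.sub a2
  refine ⟨ω, hωd, hω, hfix, ?_, fun ω' _ hm' hfix' z hz => (huniq z hz _ (hm' hz) (hfix' z hz)).symm⟩
  obtain ⟨C, hC, hgr⟩ := growth hωd hω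
  have hIy : ∀ y : ℝ, 0 < y → (I * y : ℂ) ∈ UHP := fun y hy => by simpa [mem_UHP] using hy
  have l1 : Tendsto (fun y : ℝ => ‖F₁ (ω (I * y)) - ω (I * y)‖ / y) atTop (𝓝 0) := by
    refine sector_limit hG₁d hG₁m (lim_sub hl₁) (u := fun y => ω (I * y)) hC ?_
    filter_upwards [eventually_ge_atTop 1] with y hy
    have hU := hIy y (by linarith)
    refine ⟨?_, hgr y hy⟩
    have := hfc _ hU _ (hω _ hU)
    rw [hfix _ hU] at this
    simpa using this.le
  set u : ℝ → ℂ := fun y => F₁ (ω (I * y)) - ω (I * y) + I * y with hudef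
  have l2 : Tendsto (fun y : ℝ => ‖F₂ (u y) - u y‖ / y) atTop (𝓝 0) := by
    refine sector_limit hG₂d hG₂m (lim_sub hl₂) (u := u) (C := 2) (by norm_num) ?_
    filter_upwards [eventually_ge_atTop 1, l1.eventually (gt_mem_nhds one_pos)] with y hy hy2
    have hy0 : 0 < y := by linarith
    have hU := hIy y hy0
    rw [div_lt_one hy0] at hy2
    constructor
    · have := hu _ _ (mem_UHP.1 hU).le (hω _ hU)
      simpa [hudef] using this.le
    · have := norm_add_le (F₁ (ω (I * y)) - ω (I * y)) (I * y)
      have e : ‖(I * y : ℂ)‖ = y := by simp [abs_of_pos hy0]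
      rw [e] at this
      simp only [hudef]
      linarith
  rw [tendsto_iff_norm_sub_tendsto_zero]
  refine l2.congr' ?_
  filter_upwards [eventually_gt_atTop 0] with y hy
  have hy' : (y : ℂ) ≠ 0 := by exact_mod_cast hy.ne'
  have hf := hfix _ (hIy y hy)
  have : ω (I * y) / (I * y) - 1 = (F₂ (u y) - u y) / (I * y) := by
    have : F₂ (u y) - u y = ω (I * y) - I * y := by
      simp only [hudef]
      linear_combination hf
    rw [this]
    field_simp
  rw [this, norm_div]
  simp [abs_of_pos hy]
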